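/- arXiv:2109.13889 — 5 statements merged into one kernel-verified Lean document; each statement's English description precedes it below -/
import Mathlib

section
/- (McAllester's PAC-Bayesian folk theorem; Theorem 1 of the paper.) For every sample size m ≥ 1 and every δ ∈ (0,1], with μ^{⊗m}-probability at least 1−δ over the draw of the sample z = (z_1,…,z_m) ∈ Z^m, every hypothesis h ∈ H with P_H(h) > 0 that is consistent with z satisfies R(h) ≤ (log(1/P_H(h)) + log(1/δ))/m. -/
open MeasureTheory

/-- McAllester's PAC-Bayesian folk theorem (Theorem 1).
`Z` is the space of labelled examples with probability measure `μ`; `H` is a countable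
hypothesis space with prior pmf `P`; `E h` is the (measurable) error set of hypothesis `h`,
so the risk is `R h = (μ (E h)).toReal`.  With probability at least `1 - δ` over an iid
sample `z : Fin m → Z` drawn from the product measure, every hypothesis `h` of positive
prior mass that is consistent with the sample satisfies
`R h ≤ (log (1 / P h) + log (1 / δ)) / m`. -/
theorem pac_bayes_folk_theorem
    {Z : Type*} [MeasurableSpace Z] (μ : Measure Z) [IsProbabilityMeasure μ]
    {H : Type*} [Countable H]
    (P : H → ℝ) (hP0 : ∀ h, 0 ≤ P h) (hP1 : ∑' h : H, P h = 1)
    (E : H → Set Z) (hE : ∀ h, MeasurableSet (E h))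
    (m : ℕ) (hm : 1 ≤ m) (δ : ℝ) (hδ0 : 0 < δ) (hδ1 : δ ≤ 1) :
    1 - δ ≤
      ((Measure.pi fun _ : Fin m => μ)
        {z : Fin m → Z | ∀ h : H, 0 < P h → (∀ i, z i ∉ E h) →
          (μ (E h)).toReal ≤ (Real.log (1 / P h) + Real.log (1 / δ)) / m}).toReal := by
  have hS : Summable P := by
    by_contra h
    rw [tsum_eq_zero_of_not_summable h] at hP1
    norm_num at hP1
  have hm' : (0 : ℝ) < m := by exact_mod_cast hm
  set ν := Measure.pi fun _ : Fin m => μ with hν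
  set G := {z : Fin m → Z | ∀ h : H, 0 < P h → (∀ i, z i ∉ E h) →
          (μ (E h)).toReal ≤ (Real.log (1 / P h) + Real.log (1 / δ)) / m} with hG
  let B : H → Set (Fin m → Z) := fun h =>
    {z | (0 < P h ∧ (Real.log (1 / P h) + Real.log (1 / δ)) / m < (μ (E h)).toReal) ∧
      ∀ i, z i ∉ E h}
  have hGB : Gᶜ ⊆ ⋃ h, B h := by
    intro z hz
    simp only [hG, Set.mem_compl_iff, Set.mem_ofPred_eq, not_forall, not_le] at hz
    obtain ⟨h, h1, h2, h3⟩ := hz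
    exact Set.mem_iUnion.2 ⟨h, ⟨h1, h3⟩, fun i => h2 i⟩
  have hB : ∀ h, ν (B h) ≤ ENNReal.ofReal (P h * δ) := by
    intro h
    by_cases hc : 0 < P h ∧ (Real.log (1 / P h) + Real.log (1 / δ)) / m < (μ (E h)).toReal
    · have e : B h = Set.univ.pi (fun _ : Fin m => (E h)ᶜ) := by
        ext z
        simp only [B, hc, Set.mem_pi, Set.mem_ofPred_eq, Set.mem_univ, Set.mem_compl_iff,
          true_and, forall_const, true_imp_iff]
      obtain ⟨hp, hlt⟩ := hc
      have hr : (μ (E h)ᶜ) = ENNReal.ofReal (1 - (μ (E h)).toReal) := by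
        rw [prob_compl_eq_one_sub (hE h), ENNReal.ofReal_sub _ ENNReal.toReal_nonneg,
          ENNReal.ofReal_one, ENNReal.ofReal_toReal (measure_ne_top _ _)]
      have hle1 : (μ (E h)).toReal ≤ 1 := by
        have := ENNReal.toReal_mono ENNReal.one_ne_top (prob_le_one (μ := μ) (s := E h))
        simpa using this
      rw [e, hν, Measure.pi_pi, Finset.prod_const, Finset.card_univ, Fintype.card_fin, hr,
        ← ENNReal.ofReal_pow (by linarith)]
      apply ENNReal.ofReal_le_ofReal
      generalize (μ (E h)).toReal = r at *
      rw [div_lt_iff₀ hm'] at hlt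
      calc (1 - r) ^ m ≤ (Real.exp (-r)) ^ m :=
            pow_le_pow_left₀ (by linarith) (Real.one_sub_le_exp_neg r) m
        _ = Real.exp (-(r * m)) := by rw [← Real.exp_nat_mul]; ring_nf
        _ ≤ Real.exp (Real.log (P h) + Real.log δ) := by
            apply Real.exp_le_exp.2
            simp only [one_div, Real.log_inv] at hlt
            linarith
        _ = P h * δ := by rw [Real.exp_add, Real.exp_log hp, Real.exp_log hδ0]
    · have e : B h = ∅ := by
        ext z
        simp only [B, Set.mem_ofPred_eq, Set.mem_empty_iff_false, iff_false]
        exact fun hz => hc hz.1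
      rw [e]
      simp
  have hGc : ν Gᶜ ≤ ENNReal.ofReal δ := by
    calc ν Gᶜ ≤ ν (⋃ h, B h) := measure_mono hGB
      _ ≤ ∑' h, ν (B h) := measure_iUnion_le B
      _ ≤ ∑' h, ENNReal.ofReal (P h * δ) := ENNReal.tsum_le_tsum hB
      _ = ENNReal.ofReal δ := by
        rw [← ENNReal.ofReal_tsum_of_nonneg (fun h => mul_nonneg (hP0 h) hδ0.le)
          (hS.mul_right δ), tsum_mul_right, hP1, one_mul]
  have h1 : (1 : ENNReal) ≤ ν G + ENNReal.ofReal δ := by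
    calc (1 : ENNReal) = ν (G ∪ Gᶜ) := by rw [Set.union_compl_self, measure_univ]
      _ ≤ ν G + ν Gᶜ := measure_union_le _ _
      _ ≤ _ := by gcongr
  have h2 := ENNReal.toReal_mono
    (ENNReal.add_ne_top.2 ⟨measure_ne_top ν G, ENNReal.ofReal_ne_top⟩) h1
  rw [ENNReal.toReal_add (measure_ne_top ν G) ENNReal.ofReal_ne_top,
    ENNReal.toReal_ofReal hδ0.le, ENNReal.toReal_one] at h2
  linarith
end

section
/- (Agnostic PAC-Bayesian bound; Theorem 2 of the paper.) For every sample size m ≥ 1 and every δ ∈ (0,1], with μ^{⊗m}-probability at least 1−δ over the draw of the sample z = (z_1,…,z_m) ∈ Z^m, every hypothesis h ∈ H with P_H(h) > 0 satisfies R(h) ≤ R_emp(h,z) + sqrt((log(1/P_H(h)) + log(1/δ))/(2m)). -/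
open MeasureTheory

lemma pac_hoeffding {Z : Type*} [MeasurableSpace Z] (μ : Measure Z) [IsProbabilityMeasure μ]
    (A : Set Z) (hA : MeasurableSet A) (m : ℕ) (hm : 1 ≤ m) (q δ : ℝ) (hq : 0 < q) (hq1 : q ≤ 1)
    (hδ0 : 0 < δ) (hδ1 : δ ≤ 1) :
    (Measure.pi fun _ : Fin m => μ)
      {z : Fin m → Z | ¬ ((μ A).toReal ≤
            (∑ i, A.indicator (fun _ => (1 : ℝ)) (z i)) / m +
              Real.sqrt ((Real.log (1 / q) + Real.log (1 / δ)) / (2 * m)))}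
      ≤ ENNReal.ofReal (q * δ) := by
  have hm0 : (0 : ℝ) < m := by exact_mod_cast hm
  have hmeas : Measurable (A.indicator (fun _ => (1 : ℝ))) := measurable_const.indicator hA
  have hint : ∫ x, A.indicator (fun _ => (1 : ℝ)) x ∂μ = (μ A).toReal := by
    rw [integral_indicator hA]; simp [Measure.real]
  have h1 : ProbabilityTheory.HasSubgaussianMGF
      (fun x => A.indicator (fun _ => (1 : ℝ)) x - (μ A).toReal) ((‖(1:ℝ) - 0‖₊ / 2) ^ 2) μ := by
    rw [← hint]
    apply ProbabilityTheory.hasSubgaussianMGF_of_mem_Icc hmeas.aemeasurable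
    refine Filter.Eventually.of_forall fun x => ?_
    by_cases hx : x ∈ A <;> simp [hx]
  have h2 := h1.neg
  have h3 : ∀ i : Fin m, ProbabilityTheory.HasSubgaussianMGF
      (fun z : Fin m → Z => (-fun x => A.indicator (fun _ => (1 : ℝ)) x - (μ A).toReal) (z i))
      ((‖(1:ℝ) - 0‖₊ / 2) ^ 2) (Measure.pi fun _ : Fin m => μ) := by
    intro i
    refine ProbabilityTheory.HasSubgaussianMGF.of_map (Y := Function.eval i)
      (measurable_pi_apply i).aemeasurable ?_
    rw [(measurePreserving_eval (fun _ : Fin m => μ) i).map_eq]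
    exact h2
  have hind := ProbabilityTheory.iIndepFun_pi (μ := fun _ : Fin m => μ)
    (X := fun _ => (-fun x => A.indicator (fun _ => (1 : ℝ)) x - (μ A).toReal))
    (fun i => (hmeas.sub_const _).neg.aemeasurable)
  have hL : 0 ≤ Real.log (1 / q) + Real.log (1 / δ) :=
    add_nonneg (Real.log_nonneg (one_le_one_div hq hq1)) (Real.log_nonneg (one_le_one_div hδ0 hδ1))
  have hε := Real.sq_sqrt (div_nonneg hL (by positivity : (0:ℝ) ≤ 2 * m))
  set ε := Real.sqrt ((Real.log (1 / q) + Real.log (1 / δ)) / (2 * m)) with hεd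
  have hε0 : 0 ≤ ε := Real.sqrt_nonneg _
  have h4 := ProbabilityTheory.HasSubgaussianMGF.measure_sum_ge_le_of_iIndepFun hind
    (s := Finset.univ) (fun i _ => h3 i) (ε := m * ε) (by positivity)
  have h5 : Real.exp (-(m * ε) ^ 2 /
      (2 * ((∑ i : Fin m, (‖(1:ℝ) - 0‖₊ / 2) ^ 2 : NNReal) : ℝ))) = q * δ := by
    have : -(m * ε) ^ 2 / (2 * ((∑ i : Fin m, (‖(1:ℝ) - 0‖₊ / 2) ^ 2 : NNReal) : ℝ))
        = Real.log q + Real.log δ := by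
      rw [mul_pow, hε]
      simp
      field_simp
      ring
    rw [this, Real.exp_add, Real.exp_log hq, Real.exp_log hδ0]
  rw [h5] at h4
  refine le_trans (measure_mono ?_) ((ENNReal.le_ofReal_iff_toReal_le
    (measure_ne_top _ _) (by positivity)).2 h4)
  intro z hz
  simp only [Set.mem_setOf_eq, not_le] at hz
  simp only [Set.mem_setOf_eq, Pi.neg_apply, neg_sub, Finset.sum_sub_distrib, Finset.sum_const,
    Finset.card_univ, Fintype.card_fin, nsmul_eq_mul]
  have := mul_lt_mul_of_pos_left hz hm0
  rw [mul_add, mul_div_cancel₀ _ hm0.ne'] at this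
  linarith

/-- Agnostic PAC-Bayesian bound (Theorem 2).
Setup as in Theorem 1; the empirical risk of `h` on the sample `z` is
`(∑ i, indicator of (E h) at z i) / m`.  With probability at least `1 - δ` over the sample,
every hypothesis `h` of positive prior mass satisfies
`R h ≤ R_emp h z + sqrt ((log (1 / P h) + log (1 / δ)) / (2 m))`. -/
theorem pac_bayes_agnostic_theorem
    {Z : Type*} [MeasurableSpace Z] (μ : Measure Z) [IsProbabilityMeasure μ]
    {H : Type*} [Countable H]
    (P : H → ℝ) (hP0 : ∀ h, 0 ≤ P h) (hP1 : ∑' h : H, P h = 1)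
    (E : H → Set Z) (hE : ∀ h, MeasurableSet (E h))
    (m : ℕ) (hm : 1 ≤ m) (δ : ℝ) (hδ0 : 0 < δ) (hδ1 : δ ≤ 1) :
    1 - δ ≤
      ((Measure.pi fun _ : Fin m => μ)
        {z : Fin m → Z | ∀ h : H, 0 < P h →
          (μ (E h)).toReal ≤
            (∑ i, (E h).indicator (fun _ => (1 : ℝ)) (z i)) / m +
              Real.sqrt ((Real.log (1 / P h) + Real.log (1 / δ)) / (2 * m))}).toReal := by
  have hs : Summable P := by
    by_contra h
    rw [tsum_eq_zero_of_not_summable h] at hP1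
    exact zero_ne_one hP1
  set G := {z : Fin m → Z | ∀ h : H, 0 < P h →
          (μ (E h)).toReal ≤
            (∑ i, (E h).indicator (fun _ => (1 : ℝ)) (z i)) / m +
              Real.sqrt ((Real.log (1 / P h) + Real.log (1 / δ)) / (2 * m))} with hG
  have hbad : (Measure.pi fun _ : Fin m => μ) Gᶜ ≤ ENNReal.ofReal δ := by
    have hsub : Gᶜ ⊆ ⋃ h : H, {z : Fin m → Z | 0 < P h ∧ ¬ ((μ (E h)).toReal ≤
            (∑ i, (E h).indicator (fun _ => (1 : ℝ)) (z i)) / m +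
              Real.sqrt ((Real.log (1 / P h) + Real.log (1 / δ)) / (2 * m)))} := by
      intro z hz
      simp only [hG, Set.mem_compl_iff, Set.mem_setOf_eq, not_forall] at hz
      obtain ⟨h, h0, h1⟩ := hz
      exact Set.mem_iUnion.2 ⟨h, h0, h1⟩
    refine (measure_mono hsub).trans ((measure_iUnion_le _).trans ?_)
    calc _ ≤ ∑' h, ENNReal.ofReal (P h * δ) := by
          refine ENNReal.tsum_le_tsum fun h => ?_
          rcases (hP0 h).eq_or_lt with h0 | h0
          · simp [← h0]
          · refine (measure_mono fun z hz => hz.2).trans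
              (pac_hoeffding μ (E h) (hE h) m hm (P h) δ h0 ?_ hδ0 hδ1)
            rw [← hP1]
            exact hs.le_tsum h fun j _ => hP0 j
      _ = ENNReal.ofReal δ := by
          rw [← ENNReal.ofReal_tsum_of_nonneg (fun h => mul_nonneg (hP0 h) hδ0.le)
            (hs.mul_right δ), tsum_mul_right, hP1, one_mul]
  have hbad' : ((Measure.pi fun _ : Fin m => μ) Gᶜ).toReal ≤ δ :=
    ENNReal.toReal_le_of_le_ofReal hδ0.le hbad
  have hu : (1 : ENNReal) ≤ (Measure.pi fun _ : Fin m => μ) G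
      + (Measure.pi fun _ : Fin m => μ) Gᶜ := by
    rw [← measure_univ (μ := Measure.pi fun _ : Fin m => μ), ← Set.union_compl_self G]
    exact measure_union_le _ _
  have hu' := ENNReal.toReal_mono (by finiteness) hu
  rw [ENNReal.toReal_add (by finiteness) (by finiteness), ENNReal.toReal_one] at hu'
  linarith
end

section
/- (Refined PAC-Bayesian bound for 1-NN with the sparsity prior; Theorem 4 of the paper, stated via the prior-mass condition its proof establishes.) For every sample size m ≥ 1, every sparsity value S ∈ [0,1) chosen a priori, and every δ ∈ (0,1], with μ^{⊗m}-probability at least 1−δ over the draw of the sample z ∈ Z^m, the following holds: for every hypothesis h ∈ H that is consistent with z and every integer r with 0 ≤ r ≤ m, if P_H(h) ≥ (1−S)^{m−r}·(1+S)^r/(2^m·(1−S^m)), then R(h) ≤ (m·log(2/(1−S)) + r·log((1−S)/(1+S)) + log(1/δ))/m. -/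
open MeasureTheory

/-- Refined PAC-Bayesian bound for 1-NN with the sparsity prior (Theorem 4), stated via the
prior-mass condition its proof establishes: with probability at least `1 - δ` over the
sample, every hypothesis `h` consistent with the sample whose prior mass is at least
`(1 - S) ^ (m - r) * (1 + S) ^ r / (2 ^ m * (1 - S ^ m))` for some `r ≤ m` satisfies
`R h ≤ (m log (2 / (1 - S)) + r log ((1 - S) / (1 + S)) + log (1 / δ)) / m`. -/
theorem pac_bayes_one_nn_sparsity_prior
    {Z : Type*} [MeasurableSpace Z] (μ : Measure Z) [IsProbabilityMeasure μ]
    {H : Type*} [Countable H]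
    (P : H → ℝ) (hP0 : ∀ h, 0 ≤ P h) (hP1 : ∑' h : H, P h = 1)
    (E : H → Set Z) (hE : ∀ h, MeasurableSet (E h))
    (m : ℕ) (hm : 1 ≤ m) (S : ℝ) (hS0 : 0 ≤ S) (hS1 : S < 1)
    (δ : ℝ) (hδ0 : 0 < δ) (hδ1 : δ ≤ 1) :
    1 - δ ≤
      ((Measure.pi fun _ : Fin m => μ)
        {z : Fin m → Z | ∀ h : H, ∀ r : ℕ, r ≤ m → (∀ i, z i ∉ E h) →
          ((1 - S) ^ (m - r) * (1 + S) ^ r / (2 ^ m * (1 - S ^ m)) : ℝ) ≤ P h →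
          (μ (E h)).toReal ≤
            (m * Real.log (2 / (1 - S)) + r * Real.log ((1 - S) / (1 + S)) +
              Real.log (1 / δ)) / m}).toReal := by
  classical
  have hmpos : (0:ℝ) < m := by exact_mod_cast hm
  have hsum : Summable P := by
    by_contra hn
    rw [tsum_eq_zero_of_not_summable hn] at hP1
    exact zero_ne_one hP1
  set ν := Measure.pi fun _ : Fin m => μ with hν
  set T : H → Set (Fin m → Z) := fun h =>
    if Real.exp (-(m * (μ (E h)).toReal)) ≤ δ * P h then
      Set.univ.pi (fun _ => (E h)ᶜ) else ∅ with hT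
  have hTm : ∀ h, MeasurableSet (T h) := by
    intro h
    simp only [hT]
    split_ifs
    · exact MeasurableSet.univ_pi fun _ => (hE h).compl
    · exact MeasurableSet.empty
  have hTle : ∀ h, ν (T h) ≤ ENNReal.ofReal (δ * P h) := by
    intro h
    simp only [hT]
    split_ifs with hc
    · rw [hν, Measure.pi_pi]
      simp only [Finset.prod_const, Finset.card_univ, Fintype.card_fin]
      have h1 : μ (E h)ᶜ = ENNReal.ofReal (1 - (μ (E h)).toReal) := by
        rw [prob_compl_eq_one_sub (hE h), ENNReal.ofReal_sub _ ENNReal.toReal_nonneg,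
          ENNReal.ofReal_one, ENNReal.ofReal_toReal (measure_ne_top _ _)]
      have hle1 : (μ (E h)).toReal ≤ 1 := by
        have := ENNReal.toReal_mono ENNReal.one_ne_top (prob_le_one (μ := μ) (s := E h))
        simpa using this
      rw [h1, ← ENNReal.ofReal_pow (by linarith)]
      apply ENNReal.ofReal_le_ofReal
      refine le_trans ?_ hc
      have h2 : 1 - (μ (E h)).toReal ≤ Real.exp (-(μ (E h)).toReal) :=
        Real.one_sub_le_exp_neg _
      calc (1 - (μ (E h)).toReal) ^ m ≤ (Real.exp (-(μ (E h)).toReal)) ^ m :=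
            pow_le_pow_left₀ (by linarith) h2 m
        _ = Real.exp (-(m * (μ (E h)).toReal)) := by
            rw [← Real.exp_nat_mul]; ring_nf
    · simp
  have hU : ν (⋃ h, T h) ≤ ENNReal.ofReal δ := by
    calc ν (⋃ h, T h) ≤ ∑' h, ν (T h) := measure_iUnion_le _
      _ ≤ ∑' h, ENNReal.ofReal (δ * P h) := ENNReal.tsum_le_tsum hTle
      _ = ENNReal.ofReal δ := by
        rw [← ENNReal.ofReal_tsum_of_nonneg (fun h => mul_nonneg hδ0.le (hP0 h))
          (hsum.mul_left δ), tsum_mul_left, hP1, mul_one]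
  have hUm : MeasurableSet (⋃ h, T h) := MeasurableSet.iUnion hTm
  have hUr : (ν (⋃ h, T h)).toReal ≤ δ := ENNReal.toReal_le_of_le_ofReal hδ0.le hU
  have hC : (ν (⋃ h, T h)ᶜ).toReal = 1 - (ν (⋃ h, T h)).toReal := by
    rw [prob_compl_eq_one_sub hUm, ENNReal.toReal_sub_of_le prob_le_one ENNReal.one_ne_top,
      ENNReal.toReal_one]
  refine le_trans (by rw [hC]; linarith : 1 - δ ≤ (ν (⋃ h, T h)ᶜ).toReal) ?_
  refine ENNReal.toReal_mono (measure_ne_top _ _) (measure_mono ?_)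
  intro z hz h r hr hcons hp
  by_contra hlt
  push Not at hlt
  apply hz
  refine Set.mem_iUnion.2 ⟨h, ?_⟩
  have a1 : (0:ℝ) < 1 - S := by linarith
  have a2 : (0:ℝ) < 1 + S := by linarith
  have hSm : S ^ m < 1 := pow_lt_one₀ hS0 hS1 (by omega)
  have hSm0 : 0 ≤ S ^ m := pow_nonneg hS0 m
  set q : ℝ := (1 - S) ^ (m - r) * (1 + S) ^ r / 2 ^ m with hq
  have hq0 : 0 < q := by positivity
  have hqP : q ≤ P h := by
    refine le_trans ?_ hp
    rw [hq]
    apply div_le_div_of_nonneg_left (by positivity)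
    · exact mul_pos (by positivity) (by linarith)
    · exact mul_le_of_le_one_right (by positivity) (by linarith)
  have hlog : m * Real.log (2 / (1 - S)) + r * Real.log ((1 - S) / (1 + S)) +
      Real.log (1 / δ) = - Real.log (δ * q) := by
    have b1 : (1 - S) ^ (m - r) ≠ 0 := (pow_pos a1 _).ne'
    have b2 : (1 + S) ^ r ≠ 0 := (pow_pos a2 _).ne'
    have b3 : (2:ℝ) ^ m ≠ 0 := by positivity
    rw [Real.log_mul hδ0.ne' hq0.ne', hq,
      Real.log_div two_ne_zero a1.ne', Real.log_div a1.ne' a2.ne',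
      Real.log_div one_ne_zero hδ0.ne', Real.log_one,
      Real.log_div (mul_ne_zero b1 b2) b3,
      Real.log_mul b1 b2, Real.log_pow, Real.log_pow, Real.log_pow, Nat.cast_sub hr]
    ring
  have hc : Real.exp (-(m * (μ (E h)).toReal)) ≤ δ * P h := by
    refine le_trans ?_ (mul_le_mul_of_nonneg_left hqP hδ0.le)
    rw [hlog, div_lt_iff₀ hmpos] at hlt
    rw [← Real.le_log_iff_exp_le (by positivity)]
    linarith
  simp only [hT]
  rw [if_pos hc]
  intro i _
  exact hcons i
end

section
/- (Pointwise convergence of the Parzen-window kernel classifier to the 1-NN classifier.) Let (X, d) be a metric space, let x_1, …, x_m ∈ X be training points with labels y_1, …, y_m ∈ {−1,+1}, and let x ∈ X be a point admitting a unique nearest training point, i.e. there is an index j* such that d(x, x_{j*}) < d(x, x_i) for all i ≠ j*. Then there exists σ_0 > 0 such that for all σ with 0 < σ < σ_0, the sum Σ_{i=1}^m y_i·exp(−d(x, x_i)²/σ²) has the same (nonzero) sign as y_{j*}. In particular, lim_{σ→0⁺} sign(Σ_{i=1}^m y_i·exp(−d(x,x_i)²/σ²)) = y_{j*} = NN_1(x),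 the 1-nearest-neighbour prediction at x. -/
open Filter

/-- Pointwise convergence of the Parzen-window kernel classifier to the 1-NN classifier.
If `x0` has a unique nearest training point `x j`, then for all sufficiently small
bandwidths `σ > 0` the sum `∑ i, y i * exp (-(dist x0 (x i))² / σ²)` has the same
(nonzero) sign as `y j`; in particular the sign tends to `y j = NN₁(x0)` as `σ → 0⁺`. -/
theorem parzen_to_one_nn_pointwise
    {X : Type*} [MetricSpace X] (m : ℕ) (x : Fin m → X) (y : Fin m → ℝ)
    (hy : ∀ i, y i = -1 ∨ y i = 1) (x0 : X) (j : Fin m)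
    (hj : ∀ i, i ≠ j → dist x0 (x j) < dist x0 (x i)) :
    (∃ σ0 > (0 : ℝ), ∀ σ : ℝ, 0 < σ → σ < σ0 →
      Real.sign (∑ i, y i * Real.exp (-(dist x0 (x i)) ^ 2 / σ ^ 2)) = y j) ∧
    Tendsto (fun σ : ℝ =>
        Real.sign (∑ i, y i * Real.exp (-(dist x0 (x i)) ^ 2 / σ ^ 2)))
      (nhdsWithin 0 (Set.Ioi 0)) (nhds (y j)) := by
  have hterm : ∀ i, Tendsto (fun σ : ℝ => y i * Real.exp
      ((dist x0 (x j) ^ 2 - dist x0 (x i) ^ 2) * (σ ^ 2)⁻¹))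
      (nhdsWithin 0 (Set.Ioi 0)) (nhds (if i = j then y j else 0)) := by
    intro i
    by_cases h : i = j
    · subst h
      simp
    · rw [if_neg h]
      have hneg : dist x0 (x j) ^ 2 - dist x0 (x i) ^ 2 < 0 := by
        have h1 := hj i h
        have h2 : 0 ≤ dist x0 (x j) := dist_nonneg
        nlinarith
      have hinv : Tendsto (fun σ : ℝ => (σ ^ 2)⁻¹) (nhdsWithin 0 (Set.Ioi 0)) atTop := by
        have h3 := (tendsto_pow_atTop (α := ℝ) two_ne_zero).comp
          (tendsto_inv_nhdsGT_zero (𝕜 := ℝ))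
        refine h3.congr fun σ => ?_
        simp
      have h4 := (Real.tendsto_exp_atBot.comp (hinv.const_mul_atTop_of_neg hneg)).const_mul (y i)
      rw [mul_zero] at h4
      exact h4
  have hsum := tendsto_finsetSum Finset.univ (fun i _ => hterm i)
  rw [Finset.sum_ite_eq' Finset.univ j, if_pos (Finset.mem_univ j)] at hsum
  have hfac : ∀ σ : ℝ, ∑ i, y i * Real.exp (-(dist x0 (x i)) ^ 2 / σ ^ 2) =
      Real.exp (-(dist x0 (x j)) ^ 2 / σ ^ 2) * ∑ i, y i * Real.exp
      ((dist x0 (x j) ^ 2 - dist x0 (x i) ^ 2) * (σ ^ 2)⁻¹) := by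
    intro σ
    rw [Finset.mul_sum]
    refine Finset.sum_congr rfl fun i _ => ?_
    rw [mul_left_comm, ← Real.exp_add]
    congr 2
    ring
  have hev : ∀ᶠ σ in nhdsWithin (0 : ℝ) (Set.Ioi 0),
      Real.sign (∑ i, y i * Real.exp (-(dist x0 (x i)) ^ 2 / σ ^ 2)) = y j := by
    rcases hy j with h | h
    · filter_upwards [hsum.eventually_lt_const (show y j < 0 by rw [h]; norm_num)] with σ hσ
      rw [hfac, h]
      exact Real.sign_of_neg (mul_neg_of_pos_of_neg (Real.exp_pos _) hσ)
    · filter_upwards [hsum.eventually_const_lt (show 0 < y j by rw [h]; norm_num)] with σ hσ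
      rw [hfac, h]
      exact Real.sign_of_pos (mul_pos (Real.exp_pos _) hσ)
  refine ⟨?_, tendsto_const_nhds.congr' (hev.mono fun σ h => h.symm)⟩
  obtain ⟨u, hu, hsub⟩ := mem_nhdsGT_iff_exists_Ioo_subset.1 hev
  exact ⟨u, hu, fun σ h0 h1 => hsub ⟨h0, h1⟩⟩
end

section
/- (Convergence of the risk of the Parzen-window classifier to the risk of 1-NN.) Let (X, d) be a metric space equipped with its Borel σ-algebra, let P be a probability measure on X × {−1,+1}, and let x_1, …, x_m ∈ X be training points with labels y_1, …, y_m ∈ {−1,+1}. Assume that for P-almost every (x, y), the point x has a unique nearest training point, i.e. there is a (then unique) index j*(x) with d(x, x_{j*(x)}) < d(x, x_i) for all i ≠ j*(x). Define ĥ_σ(x) = sign(Σ_{i=1}^m y_i·exp(−d(x,x_i)²/σ²)) and NN_1(x) = y_{j*(x)}. Then lim_{σ→0⁺} P({(x,y) : ĥ_σ(x) ≠ y}) = P({(x,y) : NN_1(x) ≠ y}). -/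
open Filter MeasureTheory

/-- The rescaled kernel sum tends to the nearest label. -/
lemma parzen_aux {m : ℕ} (y d : Fin m → ℝ) (k : Fin m) (hd0 : ∀ i, 0 ≤ d i)
    (hd : ∀ i, i ≠ k → d k < d i) :
    Tendsto (fun σ : ℝ => (∑ i, y i * Real.exp (-(d i) ^ 2 / σ ^ 2)) * Real.exp ((d k) ^ 2 / σ ^ 2))
      (nhdsWithin 0 (Set.Ioi 0)) (nhds (y k)) := by
  have hinv : Tendsto (fun σ : ℝ => (σ ^ 2)⁻¹) (nhdsWithin 0 (Set.Ioi 0)) atTop := by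
    have h := (tendsto_pow_atTop (α := ℝ) (two_ne_zero)).comp
      (tendsto_inv_nhdsGT_zero (𝕜 := ℝ))
    refine h.congr fun σ => ?_
    simp
  have hterm : ∀ i, Tendsto (fun σ : ℝ => y i * Real.exp (((d k) ^ 2 - (d i) ^ 2) * (σ ^ 2)⁻¹))
      (nhdsWithin 0 (Set.Ioi 0)) (nhds (if i = k then y k else 0)) := by
    intro i
    by_cases hik : i = k
    · subst hik
      simp
    · simp only [hik, if_false]
      have hneg : (d k) ^ 2 - (d i) ^ 2 < 0 := by
        nlinarith [hd i hik, hd0 i, hd0 k]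
      have h := Real.tendsto_exp_atBot.comp (hinv.const_mul_atTop_of_neg hneg)
      simpa using h.const_mul (y i)
  have hs := tendsto_finsetSum Finset.univ (fun i _ => hterm i)
  simp only [Finset.sum_ite_eq', Finset.mem_univ, if_true] at hs
  refine hs.congr fun σ => ?_
  rw [Finset.sum_mul]
  refine Finset.sum_congr rfl fun i _ => ?_
  rw [mul_assoc, ← Real.exp_add]
  congr 2
  ring

lemma parzen_measurable_sign : Measurable Real.sign := by
  unfold Real.sign
  exact Measurable.ite measurableSet_Iio measurable_const
    (Measurable.ite measurableSet_Ioi measurable_const measurable_const)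

/-- Convergence of the risk of the Parzen-window classifier to the risk of 1-NN.
`P` is a probability measure on labelled points `(x, y) ∈ X × ℝ` (labels `±1`),
`j x0` is the index of the nearest training point to `x0` (assumed measurable), and
for `P`-almost every `(x0, y0)` the nearest training point is unique.  Then the risk of
the bandwidth-`σ` kernel classifier `x0 ↦ sign (∑ i, y i * exp (-(dist x0 (x i))²/σ²))`
converges, as `σ → 0⁺`, to the risk of the 1-NN classifier `x0 ↦ y (j x0)`. -/
theorem parzen_risk_tendsto_one_nn_risk
    {X : Type*} [MetricSpace X] [MeasurableSpace X] [BorelSpace X]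
    (P : Measure (X × ℝ)) [IsProbabilityMeasure P]
    (m : ℕ) (x : Fin m → X) (y : Fin m → ℝ) (hy : ∀ i, y i = -1 ∨ y i = 1)
    (j : X → Fin m) (hjm : Measurable j)
    (hj : ∀ᵐ p ∂P, ∀ i, i ≠ j p.1 → dist p.1 (x (j p.1)) < dist p.1 (x i)) :
    Tendsto (fun σ : ℝ =>
        (P {p : X × ℝ |
          Real.sign (∑ i, y i * Real.exp (-(dist p.1 (x i)) ^ 2 / σ ^ 2)) ≠ p.2}).toReal)
      (nhdsWithin 0 (Set.Ioi 0))
      (nhds (P {p : X × ℝ | y (j p.1) ≠ p.2}).toReal) := by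
  refine (ENNReal.tendsto_toReal (measure_ne_top P _)).comp ?_
  refine tendsto_measure_of_ae_tendsto_indicator_of_isFiniteMeasure _ ?_ ?_ ?_
  · have h1 : Measurable (fun p : X × ℝ => y (j p.1)) :=
      (measurable_from_top (f := y)).comp (hjm.comp measurable_fst)
    exact (measurableSet_eq_fun h1 measurable_snd).compl
  · intro σ
    have hdist : ∀ i, Measurable (fun p : X × ℝ => dist p.1 (x i)) := fun i =>
      ((continuous_id.dist continuous_const).measurable).comp measurable_fst
    have h1 : Measurable (fun p : X × ℝ =>
        Real.sign (∑ i, y i * Real.exp (-(dist p.1 (x i)) ^ 2 / σ ^ 2))) := by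
      refine parzen_measurable_sign.comp ?_
      refine Finset.measurable_sum _ fun i _ => ?_
      exact (Real.measurable_exp.comp
        ((((hdist i).pow_const 2).neg).div_const _)).const_mul _
    exact (measurableSet_eq_fun h1 measurable_snd).compl
  · filter_upwards [hj] with p hp
    have h := parzen_aux y (fun i => dist p.1 (x i)) (j p.1) (fun i => dist_nonneg) hp
    have key : ∀ᶠ σ in nhdsWithin (0 : ℝ) (Set.Ioi 0),
        Real.sign (∑ i, y i * Real.exp (-(dist p.1 (x i)) ^ 2 / σ ^ 2)) = y (j p.1) := by
      rcases hy (j p.1) with hk | hk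
      · rw [hk] at h ⊢
        filter_upwards [h.eventually (gt_mem_nhds (show (-1 : ℝ) < 0 by norm_num))] with σ hσ
        exact Real.sign_of_neg (neg_of_mul_neg_left hσ (Real.exp_pos _).le)
      · rw [hk] at h ⊢
        filter_upwards [h.eventually (lt_mem_nhds (show (0 : ℝ) < 1 by norm_num))] with σ hσ
        exact Real.sign_of_pos (pos_of_mul_pos_left hσ (Real.exp_pos _).le)
    filter_upwards [key] with σ hσ
    simp only [Set.mem_setOf_eq, hσ]
end
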